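/- arXiv:2308.07480 — 3 statements merged into one kernel-verified Lean document; each statement's English description precedes it below -/
import Mathlib

section
/- Let X be a real random variable and U a real random variable independent of X with E[U] = 0. Let l, s : ℝ → ℝ be measurable and define Y := l(X) + s(X)·U, with l(X), s(X)·U and Y integrable. If Y is independent of X, then l(X) = E[Y] almost surely; that is, the location function evaluated at X is almost surely constant. -/
open MeasureTheory ProbabilityTheory

/-!
Condition on `X`. The location `l(X)` is `σ(X)`-measurable and the scale `s(X)` pulls out of the
conditional expectation, so `E[Y | X] = l(X) + s(X) · E[U | X]`. Independence enters only through
the conditional means it makes constant: `E[U | X] = E[U] = 0` and `E[Y | X] = E[Y]`.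
-/

section MeanIndependence

variable {Ω β E F G : Type*} {mΩ : MeasurableSpace Ω} {μ : Measure Ω}
  [NormedAddCommGroup E] [NormedSpace ℝ E] [CompleteSpace E]
  [NormedAddCommGroup F] [NormedSpace ℝ F]
  [NormedAddCommGroup G] [NormedSpace ℝ G] [CompleteSpace G]

theorem condExp_add_bilin_of_aestronglyMeasurable_left {m : MeasurableSpace Ω} (hm : m ≤ mΩ)
    [SigmaFinite (μ.trim hm)] (B : F →L[ℝ] E →L[ℝ] G) {L : Ω → G} {S : Ω → F} {U : Ω → E}
    (hL : AEStronglyMeasurable[m] L μ) (hS : AEStronglyMeasurable[m] S μ)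
    (hLint : Integrable L μ) (hSUint : Integrable (fun ω ↦ B (S ω) (U ω)) μ)
    (hUint : Integrable U μ) :
    μ[fun ω ↦ L ω + B (S ω) (U ω) | m] =ᵐ[μ] fun ω ↦ L ω + B (S ω) (μ[U | m] ω) :=
  calc μ[fun ω ↦ L ω + B (S ω) (U ω) | m]
    _ =ᵐ[μ] μ[L | m] + μ[fun ω ↦ B (S ω) (U ω) | m] := condExp_add hLint hSUint m
    _ =ᵐ[μ] L + fun ω ↦ B (S ω) (μ[U | m] ω) :=
      (condExp_of_aestronglyMeasurable' hm hL hLint).add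
        (condExp_bilin_of_aestronglyMeasurable_left B hS hSUint hUint)

variable [MeasurableSpace β] {X : Ω → β}

/-- `Y` is mean independent of `X`: conditioning on `X` does not change the expectation of `Y`.
This is meant for integrable `Y` and measurable `X`; a non-integrable `Y` satisfies it trivially,
both sides being `0` by convention. -/
def MeanIndepFun (Y : Ω → E) (X : Ω → β) (μ : Measure Ω) : Prop :=
  μ[Y | MeasurableSpace.comap X inferInstance] =ᵐ[μ] fun _ ↦ μ[Y]

theorem meanIndepFun_congr_ae {Y Y' : Ω → E} (h : Y =ᵐ[μ] Y') :
    MeanIndepFun Y X μ ↔ MeanIndepFun Y' X μ := by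
  rw [MeanIndepFun, MeanIndepFun, integral_congr_ae h]
  exact Filter.EventuallyEq.congr_left (condExp_congr_ae h)

theorem meanIndepFun_of_indepFun [MeasurableSpace E] [BorelSpace E] {Y : Ω → E}
    (hX : Measurable X) [SigmaFinite (μ.trim hX.comap_le)] (hY : AEStronglyMeasurable Y μ)
    (h : IndepFun Y X μ) : MeanIndepFun Y X μ := by
  rw [meanIndepFun_congr_ae hY.ae_eq_mk]
  have hmk : StronglyMeasurable[MeasurableSpace.comap (hY.mk Y) inferInstance] (hY.mk Y) :=
    stronglyMeasurable_iff_measurable_separable.2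
      ⟨comap_measurable _, hY.stronglyMeasurable_mk.isSeparable_range⟩
  exact condExp_indep_eq hY.stronglyMeasurable_mk.measurable.comap_le hX.comap_le hmk
    (h.congr hY.ae_eq_mk .rfl)

theorem location_const_of_indep_general (B : F →L[ℝ] E →L[ℝ] G) {U : Ω → E}
    (hX : Measurable X) [SigmaFinite (μ.trim hX.comap_le)] {l : β → G} {s : β → F}
    (hl : StronglyMeasurable l) (hs : StronglyMeasurable s)
    (hlint : Integrable (fun ω ↦ l (X ω)) μ)
    (hsUint : Integrable (fun ω ↦ B (s (X ω)) (U ω)) μ) (hUint : Integrable U μ)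
    (hUX : MeanIndepFun U X μ) (hYX : MeanIndepFun (fun ω ↦ l (X ω) + B (s (X ω)) (U ω)) X μ) :
    (fun ω ↦ l (X ω) + B (s (X ω)) μ[U]) =ᵐ[μ]
      fun _ ↦ ∫ ω, l (X ω) + B (s (X ω)) (U ω) ∂μ := by
  have hcond := condExp_add_bilin_of_aestronglyMeasurable_left hX.comap_le B
    (hl.comp_measurable (comap_measurable X)).aestronglyMeasurable
    (hs.comp_measurable (comap_measurable X)).aestronglyMeasurable hlint hsUint hUint
  filter_upwards [hcond, hUX, hYX] with ω hcondω hUω hYω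
  rw [← hUω, ← hYω]
  exact hcondω.symm

end MeanIndependence

/-- For an affine mechanism `Y = l(X) + s(X)·U` with `U` independent of
`X` and `E[U] = 0`, if `Y` is independent of `X` then the location term `l(X)` is almost
surely equal to the constant `E[Y]`. -/
theorem location_const_of_indep
    {Ω : Type*} [MeasureSpace Ω] [IsProbabilityMeasure (ℙ : Measure Ω)]
    (X : Ω → ℝ) (U : Ω → ℝ)
    (hX : Measurable X) (hU : Measurable U)
    (hindepUX : IndepFun U X ℙ)
    (hUint : Integrable U ℙ)
    (hUmean : ∫ ω, U ω ∂ℙ = 0)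
    (l s : ℝ → ℝ) (hl : Measurable l) (hs : Measurable s)
    (Y : Ω → ℝ) (hY : Y = fun ω => l (X ω) + s (X ω) * U ω)
    (hlint : Integrable (fun ω => l (X ω)) ℙ)
    (hsUint : Integrable (fun ω => s (X ω) * U ω) ℙ)
    (hYint : Integrable Y ℙ)
    (hindepYX : IndepFun Y X ℙ) :
    (fun ω => l (X ω)) =ᵐ[ℙ] fun _ => ∫ ω, Y ω ∂ℙ := by
  subst hY
  simpa [hUmean] using location_const_of_indep_general (.mul ℝ ℝ) hX hl.stronglyMeasurable
    hs.stronglyMeasurable hlint hsUint hUint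
    (meanIndepFun_of_indepFun hX hUint.aestronglyMeasurable hindepUX)
    (meanIndepFun_of_indepFun hX hYint.aestronglyMeasurable hindepYX)
end

section
/- (Currying lemma.) Let Y, U be random variables and Q, R random vectors, all with values in standard Borel spaces on a common probability space, such that U is independent of the triple (Y, Q, R). Let f be a measurable function of (y, q, u). Then for (law of (Q,R))-almost every (q, r), the regular conditional distribution of f(Y, Q, U) given (Q, R) = (q, r) equals the pushforward of the product measure (regular conditional distribution of Y given (Q,R) = (q,r)) ⊗ (law of U) under the map (y, u) ↦ f(y, q, u). -/
open MeasureTheory ProbabilityTheory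

/-!
Since `U` is independent of `(X, Y)`, the triple `(X, Y, U)` has law
`(law(X) ⊗ κ) × law(U) = law(X) ⊗ (κ × law(U))`, where `κ` is the conditional distribution of `Y`
given `X`. Pushing this disintegration forward along `(x, y, u) ↦ (x, f (x, y, u))` acts on the
fibre over `x` by the curried map `f (x, ·)`, and disintegrations are almost everywhere unique.
-/

section Kernel

variable {α β γ : Type*} [MeasurableSpace α] [MeasurableSpace β] [MeasurableSpace γ]

lemma kernel_compProd_const (κ : Kernel α β) [IsSFiniteKernel κ] (ν : Measure γ) [SFinite ν] :
    κ ⊗ₖ Kernel.const (α × β) ν = κ ×ₖ Kernel.const α ν := by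
  ext1 a
  calc (κ ⊗ₖ Kernel.const (α × β) ν) a
    _ = κ a ⊗ₘ Kernel.const β ν := Kernel.compProd_apply_eq_compProd_sectR _ _ a
    _ = (κ a).prod ν := Measure.compProd_const
    _ = (κ ×ₖ Kernel.const α ν) a := by rw [Kernel.prod_apply, Kernel.const_apply]

lemma compProd_prod_const (μ : Measure α) (κ : Kernel α β) [IsSFiniteKernel κ]
    (ν : Measure γ) [SFinite ν] :
    μ ⊗ₘ (κ ×ₖ Kernel.const α ν) = ((μ ⊗ₘ κ).prod ν).map MeasurableEquiv.prodAssoc := by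
  rw [← kernel_compProd_const, ← Measure.compProd_assoc', Measure.compProd_const]

lemma kernel_map_id_prod_apply (κ : Kernel α β) [IsSFiniteKernel κ] {g : α × β → γ}
    (hg : Measurable g) (a : α) :
    (Kernel.id ×ₖ κ).map g a = (κ a).map (fun b => g (a, b)) := by
  rw [Kernel.map_apply _ hg, Kernel.prod_apply, Kernel.id_apply, Measure.dirac_prod,
    Measure.map_map hg measurable_prodMk_left]
  rfl

lemma compProd_map_id_prod (μ : Measure α) [SFinite μ] (κ : Kernel α β) [IsSFiniteKernel κ]
    {g : α × β → γ} (hg : Measurable g) :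
    μ ⊗ₘ (Kernel.id ×ₖ κ).map g = (μ ⊗ₘ κ).map (fun p => (p.1, g p)) := by
  have hgraph : Measurable fun p : α × β => (p.1, g p) := measurable_fst.prodMk hg
  ext s hs
  rw [Measure.compProd_apply hs, Measure.map_apply hgraph hs, Measure.compProd_apply (hgraph hs)]
  refine lintegral_congr fun a => ?_
  rw [kernel_map_id_prod_apply κ hg,
    Measure.map_apply (by fun_prop) (measurable_prodMk_left hs)]
  rfl

end Kernel

section CondDistrib

variable {Ω α β γ E : Type*} [MeasurableSpace Ω] [MeasurableSpace α] [MeasurableSpace β]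
  [MeasurableSpace γ] [MeasurableSpace E] [StandardBorelSpace E] [Nonempty E]
  {μ : Measure Ω} [IsFiniteMeasure μ] {X : Ω → α} {Y : Ω → β} {U : Ω → γ}

lemma map_prodMk_eq_compProd_prod_const_of_indepFun [StandardBorelSpace β] [Nonempty β]
    (hX : AEMeasurable X μ) (hY : AEMeasurable Y μ) (hU : AEMeasurable U μ)
    (hindep : IndepFun (fun ω => (X ω, Y ω)) U μ) :
    μ.map (fun ω => (X ω, Y ω, U ω))
      = μ.map X ⊗ₘ (condDistrib Y X μ ×ₖ Kernel.const α (μ.map U)) := by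
  have hXY : AEMeasurable (fun ω => (X ω, Y ω)) μ := hX.prodMk hY
  calc μ.map (fun ω => (X ω, Y ω, U ω))
    _ = (μ.map fun ω => ((X ω, Y ω), U ω)).map MeasurableEquiv.prodAssoc :=
        (AEMeasurable.map_map_of_aemeasurable MeasurableEquiv.prodAssoc.measurable.aemeasurable
          (hXY.prodMk hU)).symm
    _ = ((μ.map fun ω => (X ω, Y ω)).prod (μ.map U)).map MeasurableEquiv.prodAssoc := by
        rw [hindep.map_prod_eq_prod_map_map hXY hU]
    _ = ((μ.map X ⊗ₘ condDistrib Y X μ).prod (μ.map U)).map MeasurableEquiv.prodAssoc := by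
        rw [compProd_map_condDistrib hY]
    _ = μ.map X ⊗ₘ (condDistrib Y X μ ×ₖ Kernel.const α (μ.map U)) :=
        (compProd_prod_const _ _ _).symm

lemma condDistrib_comp_prodMk_ae_eq_of_map_eq_compProd (hX : AEMeasurable X μ)
    (hY : AEMeasurable Y μ) {κ : Kernel α β} [IsFiniteKernel κ]
    (hκ : μ.map (fun ω => (X ω, Y ω)) = μ.map X ⊗ₘ κ) {g : α × β → E} (hg : Measurable g) :
    ∀ᵐ x ∂μ.map X,
      condDistrib (fun ω => g (X ω, Y ω)) X μ x = (κ x).map (fun y => g (x, y)) := by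
  have hXY : AEMeasurable (fun ω => (X ω, Y ω)) μ := hX.prodMk hY
  have hjoint : μ.map (fun ω => (X ω, g (X ω, Y ω))) = μ.map X ⊗ₘ (Kernel.id ×ₖ κ).map g := by
    rw [compProd_map_id_prod _ _ hg, ← hκ, AEMeasurable.map_map_of_aemeasurable
      (measurable_fst.prodMk hg).aemeasurable hXY]
    rfl
  filter_upwards [condDistrib_ae_eq_of_measure_eq_compProd X (hg.comp_aemeasurable hXY) hjoint]
    with x hx
  exact hx.trans (kernel_map_id_prod_apply κ hg x)

theorem condDistrib_curry_of_indep_general [StandardBorelSpace β] [Nonempty β]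
    (hX : AEMeasurable X μ) (hY : AEMeasurable Y μ) (hU : AEMeasurable U μ)
    (hindep : IndepFun (fun ω => (X ω, Y ω)) U μ) {f : α × β × γ → E} (hf : Measurable f) :
    ∀ᵐ x ∂μ.map X,
      condDistrib (fun ω => f (X ω, Y ω, U ω)) X μ x
        = ((condDistrib Y X μ x).prod (μ.map U)).map (fun yu => f (x, yu)) := by
  have hjoint := map_prodMk_eq_compProd_prod_const_of_indepFun hX hY hU hindep
  filter_upwards [condDistrib_comp_prodMk_ae_eq_of_map_eq_compProd hX (hY.prodMk hU) hjoint hf]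
    with x hx
  rw [hx, Kernel.prod_apply, Kernel.const_apply]

end CondDistrib

/-- **Currying lemma, Lemma 36 of Peters et al. 2014.** If `U` is
independent of `(Y, Q, R)` and `f` is measurable, then for (law of `(Q,R)`)-almost every
`(q, r)`, the regular conditional distribution of `f(Y, Q, U)` given `(Q, R) = (q, r)`
is the pushforward of (cond. distribution of `Y` given `(Q,R) = (q,r)`) ⊗ (law of `U`)
under `(y, u) ↦ f (y, q, u)`. -/
theorem condDistrib_curry_of_indep
    {Ω : Type*} [MeasureSpace Ω] [IsProbabilityMeasure (ℙ : Measure Ω)]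
    {𝒴 𝒬 ℛ 𝒰 : Type*}
    [MeasurableSpace 𝒴] [StandardBorelSpace 𝒴] [Nonempty 𝒴]
    [MeasurableSpace 𝒬] [StandardBorelSpace 𝒬]
    [MeasurableSpace ℛ] [StandardBorelSpace ℛ]
    [MeasurableSpace 𝒰] [StandardBorelSpace 𝒰] [Nonempty 𝒰]
    (Y : Ω → 𝒴) (Q : Ω → 𝒬) (R : Ω → ℛ) (U : Ω → 𝒰)
    (hY : Measurable Y) (hQ : Measurable Q) (hR : Measurable R) (hU : Measurable U)
    (hindep : IndepFun U (fun ω => (Y ω, Q ω, R ω)) ℙ)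
    (f : 𝒴 × 𝒬 × 𝒰 → ℝ) (hf : Measurable f) :
    ∀ᵐ qr ∂(Measure.map (fun ω => (Q ω, R ω)) ℙ),
      condDistrib (fun ω => f (Y ω, Q ω, U ω)) (fun ω => (Q ω, R ω)) ℙ qr
        = Measure.map (fun yu : 𝒴 × 𝒰 => f (yu.1, qr.1, yu.2))
            ((condDistrib Y (fun ω => (Q ω, R ω)) ℙ qr).prod (Measure.map U ℙ)) := by
  have hindep_prod : IndepFun (fun ω => ((Q ω, R ω), Y ω)) U ℙ :=
    (hindep.comp measurable_id measurable_swap).symm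
  exact condDistrib_curry_of_indep_general (hQ.prodMk hR).aemeasurable hY.aemeasurable
    hU.aemeasurable hindep_prod (f := fun p => f (p.2.1, p.1.1, p.2.2)) (hf.comp (by fun_prop))
end

section
/- Let W be an ℝ^k-valued random variable, X a real random variable, and U a real random variable independent of the pair (W, X) with E[U] = 0. Let l, s : ℝ^k × ℝ → ℝ be measurable, define Y := l(W, X) + s(W, X)·U, and assume l(W,X), s(W,X)·U and Y are integrable. If Y is conditionally independent of X given σ(W), then l(W, X) = E[Y ∣ σ(W)] almost surely; in particular l(W, X) is almost surely equal to a σ(W)-measurable random variable, i.e., the location term does not depend on X up to a null set. -/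
open MeasureTheory ProbabilityTheory

/-!
Conditioning on `(W, X)` freezes the location and the scale, so
`E[Y | σ(W, X)] = l(W, X) + s(W, X) · E[U]`. Since `X` carries no information about `Y` beyond that
in `W`, this conditional expectation is also `E[Y | σ(W)]`.
-/

section Conditioning

variable {Ω E : Type*} {mΩ : MeasurableSpace Ω} {μ : Measure Ω}
  [NormedAddCommGroup E] [NormedSpace ℝ E] [CompleteSpace E]

theorem condExp_add_smul_ae_eq_of_indep {m m' : MeasurableSpace Ω} (hm : m ≤ mΩ) (hm' : m' ≤ mΩ)
    [SigmaFinite (μ.trim hm)] {f U : Ω → E} {g : Ω → ℝ} (hf : AEStronglyMeasurable[m] f μ)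
    (hg : AEStronglyMeasurable[m] g μ) (hU : StronglyMeasurable[m'] U) (hindep : Indep m' m μ)
    (hfint : Integrable f μ) (hgUint : Integrable (g • U) μ) (hUint : Integrable U μ) :
    μ[f + g • U | m] =ᵐ[μ] f + g • fun _ => ∫ ω, U ω ∂μ :=
  calc μ[f + g • U | m]
    _ =ᵐ[μ] μ[f | m] + μ[g • U | m] := condExp_add hfint hgUint m
    _ =ᵐ[μ] f + g • μ[U | m] :=
      (condExp_of_aestronglyMeasurable' hm hf hfint).add
        (condExp_smul_of_aestronglyMeasurable_left hg hgUint hUint)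
    _ =ᵐ[μ] f + g • fun _ => ∫ ω, U ω ∂μ :=
      .add .rfl (.smul .rfl (condExp_indep_eq hm' hm hU hindep))

theorem condExp_comp_prodMk_ae_eq_of_condIndepFun [StandardBorelSpace Ω] [IsFiniteMeasure μ]
    {α β γ : Type*} [MeasurableSpace α] [StandardBorelSpace α] [MeasurableSpace β]
    [StandardBorelSpace β] [MeasurableSpace γ] {Y : Ω → α} {X : Ω → β} {W : Ω → γ}
    (hY : Measurable Y) (hX : Measurable X) (hW : Measurable W) (hcond : Y ⟂ᵢ[W, hW; μ] X)
    {f : α → E} (hf : StronglyMeasurable f) (hfY : Integrable (fun ω => f (Y ω)) μ) :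
    μ[fun ω => f (Y ω) | MeasurableSpace.comap (fun ω => (W ω, X ω)) inferInstance] =ᵐ[μ]
      μ[fun ω => f (Y ω) | MeasurableSpace.comap W inferInstance] := by
  obtain _ | ⟨⟨ω₀⟩⟩ := isEmpty_or_nonempty Ω
  · exact .of_forall isEmptyElim
  have : Nonempty α := ⟨Y ω₀⟩
  have : Nonempty β := ⟨X ω₀⟩
  have hWX : Measurable fun ω => (W ω, X ω) := hW.prodMk hX
  have hdistrib : ∀ᵐ ω ∂μ, condDistrib Y (fun ω => (W ω, X ω)) μ (W ω, X ω) =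
      condDistrib Y W μ (W ω) :=
    ae_of_ae_map hWX.aemeasurable
      ((condIndepFun_iff_condDistrib_prod_ae_eq_prodMkRight hY hX hW).1 hcond.symm)
  calc μ[fun ω => f (Y ω) | MeasurableSpace.comap (fun ω => (W ω, X ω)) inferInstance]
    _ =ᵐ[μ] fun ω => ∫ y, f y ∂condDistrib Y (fun ω => (W ω, X ω)) μ (W ω, X ω) :=
      condExp_ae_eq_integral_condDistrib hWX hY.aemeasurable hf hfY
    _ =ᵐ[μ] fun ω => ∫ y, f y ∂condDistrib Y W μ (W ω) := by
      filter_upwards [hdistrib] with ω hω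
      rw [hω]
    _ =ᵐ[μ] μ[fun ω => f (Y ω) | MeasurableSpace.comap W inferInstance] :=
      (condExp_ae_eq_integral_condDistrib hW hY.aemeasurable hf hfY).symm

end Conditioning

theorem location_condexp_of_condIndep_general {Ω E β γ : Type*} {mΩ : MeasurableSpace Ω}
    [StandardBorelSpace Ω] {μ : Measure Ω} [IsFiniteMeasure μ]
    [NormedAddCommGroup E] [NormedSpace ℝ E] [CompleteSpace E] [SecondCountableTopology E]
    [MeasurableSpace E] [BorelSpace E] [MeasurableSpace β] [StandardBorelSpace β]
    [MeasurableSpace γ] {W : Ω → γ} {X : Ω → β} {U : Ω → E}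
    (hW : Measurable W) (hX : Measurable X) (hU : Measurable U)
    (hindepU : IndepFun U (fun ω => (W ω, X ω)) μ) (hUint : Integrable U μ)
    {l : γ × β → E} {s : γ × β → ℝ} (hl : Measurable l) (hs : Measurable s)
    {Y : Ω → E} (hY : Y = fun ω => l (W ω, X ω) + s (W ω, X ω) • U ω)
    (hlint : Integrable (fun ω => l (W ω, X ω)) μ)
    (hsUint : Integrable (fun ω => s (W ω, X ω) • U ω) μ)
    (hcondIndep : Y ⟂ᵢ[W, hW; μ] X) :
    (fun ω => l (W ω, X ω) + s (W ω, X ω) • ∫ ω', U ω' ∂μ) =ᵐ[μ]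
      μ[Y | MeasurableSpace.comap W inferInstance] := by
  have hWX : Measurable fun ω => (W ω, X ω) := hW.prodMk hX
  have hYmeas : Measurable Y := by rw [hY]; fun_prop
  have hYint : Integrable Y μ := hY ▸ hlint.add hsUint
  have hpair : μ[Y | MeasurableSpace.comap (fun ω => (W ω, X ω)) inferInstance] =ᵐ[μ]
      fun ω => l (W ω, X ω) + s (W ω, X ω) • ∫ ω', U ω' ∂μ := by
    rw [hY]
    exact condExp_add_smul_ae_eq_of_indep hWX.comap_le hU.comap_le
      (hl.comp (comap_measurable _)).aestronglyMeasurable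
      (hs.comp (comap_measurable _)).aestronglyMeasurable
      (comap_measurable U).stronglyMeasurable hindepU hlint hsUint hUint
  exact hpair.symm.trans
    (condExp_comp_prodMk_ae_eq_of_condIndepFun hYmeas hX hW hcondIndep stronglyMeasurable_id hYint)

/-- For an LSNM mechanism `Y = l(W,X) + s(W,X)·U` with `U` independent
of the pair `(W, X)` and `E[U] = 0`: if `Y` is conditionally independent of `X` given
`σ(W)`, then `l(W, X) = E[Y | σ(W)]` almost surely, so the location term is almost surely
equal to a `σ(W)`-measurable random variable. -/
theorem location_condexp_of_condIndep
    {Ω : Type*} [MeasureSpace Ω] [StandardBorelSpace Ω]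
    [IsProbabilityMeasure (ℙ : Measure Ω)]
    {k : ℕ} (W : Ω → (Fin k → ℝ)) (X : Ω → ℝ) (U : Ω → ℝ)
    (hW : Measurable W) (hX : Measurable X) (hU : Measurable U)
    (hindepU : IndepFun U (fun ω => (W ω, X ω)) ℙ)
    (hUint : Integrable U ℙ)
    (hUmean : ∫ ω, U ω ∂ℙ = 0)
    (l s : (Fin k → ℝ) × ℝ → ℝ) (hl : Measurable l) (hs : Measurable s)
    (Y : Ω → ℝ) (hY : Y = fun ω => l (W ω, X ω) + s (W ω, X ω) * U ω)
    (hlint : Integrable (fun ω => l (W ω, X ω)) ℙ)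
    (hsUint : Integrable (fun ω => s (W ω, X ω) * U ω) ℙ)
    (hYint : Integrable Y ℙ)
    (hcondIndep : CondIndepFun (MeasurableSpace.comap W inferInstance) hW.comap_le Y X ℙ) :
    (fun ω => l (W ω, X ω)) =ᵐ[ℙ] ℙ[Y | MeasurableSpace.comap W inferInstance] := by
  simpa [hUmean] using location_condexp_of_condIndep_general hW hX hU hindepU hUint hl hs hY
    hlint hsUint hcondIndep
end
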